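/- arXiv:0810.2495 — 2 statements merged into one kernel-verified Lean document; each statement's English description precedes it below -/
import Mathlib

section
/- Let b, B : ℝ → ℝ be continuous functions satisfying |b(r)| ≤ B(r) for all r ∈ ℝ, and define a(x) := ∫₀ˣ b(r) dr and A(x) := ∫₀ˣ B(r) dr. Fix β > 0 and let w : [0, β] → ℝ be any continuous path. Then s²_β(a, w) ≤ s²_β(A, w), where for a continuous function f : ℝ → ℝ one sets m_β(f, w) := (1/β) ∫₀^β f(w(τ)) dτ and s²_β(f, w) := (1/β) ∫₀^β f(w(τ))² dτ − (m_β(f, w))². (This is the path-wise variance inequality from which the diamagnetic monotonicity of the heat kernel is deduced.) -/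
/-!
The variance of `X` is half the mean of `(X s - X t) ^ 2` over two independent samples `s, t`, so a
function with smaller increments than another also has smaller variance. Since `|b| ≤ B`, the
increments of a primitive of `b` are bounded by those of a primitive of `B`, and this survives
composition with any path. Time averages over `[0, β]` are means for the uniform probability
measure.
-/

open MeasureTheory ProbabilityTheory

theorem memLp_of_norm_sub_le {Ω E F : Type*} [MeasurableSpace Ω] {μ : Measure Ω}
    [IsFiniteMeasure μ] [NeZero μ] [NormedAddCommGroup E] [NormedAddCommGroup F] {X : Ω → E}
    {Y : Ω → F} {p : ENNReal} (hX : AEStronglyMeasurable X μ) (hY : MemLp Y p μ)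
    (hXY : ∀ᵐ q ∂(μ.prod μ), ‖X q.1 - X q.2‖ ≤ ‖Y q.1 - Y q.2‖) : MemLp X p μ := by
  obtain ⟨s, hs⟩ := (Measure.ae_ae_of_ae_prod hXY).exists
  have hXs : MemLp (fun t ↦ X s - X t) p μ :=
    ((memLp_const (Y s)).sub hY).mono (aestronglyMeasurable_const.sub hX) hs
  simpa only [Pi.sub_def, sub_sub_cancel] using (memLp_const (X s)).sub hXs

section Variance

variable {Ω : Type*} [MeasurableSpace Ω] {μ : Measure Ω} [IsProbabilityMeasure μ] {X Y : Ω → ℝ}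

theorem two_mul_variance_eq_integral_sub_sq (hX : MemLp X 2 μ) :
    2 * Var[X; μ] = ∫ p, (X p.1 - X p.2) ^ 2 ∂(μ.prod μ) := by
  have integral_sub_eq_zero : ∫ p, (X p.1 - X p.2) ∂(μ.prod μ) = 0 := by
    have hX_int := hX.integrable one_le_two
    rw [integral_sub (hX_int.comp_fst μ) (hX_int.comp_snd μ), integral_fun_fst, integral_fun_snd,
      sub_self]
  calc 2 * Var[X; μ] = Var[X; μ] + Var[-X; μ] := by rw [variance_neg, two_mul]
    _ = Var[fun p ↦ X p.1 - X p.2; μ.prod μ] := by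
      simpa only [sub_eq_add_neg, Pi.neg_apply] using (variance_add_prod hX hX.neg).symm
    _ = ∫ p, (X p.1 - X p.2) ^ 2 ∂(μ.prod μ) :=
      variance_of_integral_eq_zero ((hX.comp_fst μ).sub (hX.comp_snd μ)).aemeasurable
        integral_sub_eq_zero

theorem variance_le_variance_of_abs_sub_le (hX : AEStronglyMeasurable X μ) (hY : MemLp Y 2 μ)
    (hXY : ∀ᵐ p ∂(μ.prod μ), |X p.1 - X p.2| ≤ |Y p.1 - Y p.2|) :
    Var[X; μ] ≤ Var[Y; μ] := by
  have hX_memLp := memLp_of_norm_sub_le hX hY hXY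
  have integrable_sub_sq {Z : Ω → ℝ} (hZ : MemLp Z 2 μ) :
      Integrable (fun p ↦ (Z p.1 - Z p.2) ^ 2) (μ.prod μ) :=
    ((hZ.comp_fst μ).sub (hZ.comp_snd μ)).integrable_sq
  refine le_of_mul_le_mul_left ?_ (zero_lt_two (α := ℝ))
  rw [two_mul_variance_eq_integral_sub_sq hX_memLp, two_mul_variance_eq_integral_sub_sq hY]
  exact integral_mono_ae (integrable_sub_sq hX_memLp) (integrable_sub_sq hY)
    (hXY.mono fun _ ↦ sq_le_sq.mpr)

end Variance

section UniformMeasure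

theorem memLp_cond_of_continuousOn {α E : Type*} [TopologicalSpace α] [MeasurableSpace α]
    [OpensMeasurableSpace α] [NormedAddCommGroup E] {μ : Measure α} {K : Set α} {f : α → E}
    {p : ENNReal} (hf : ContinuousOn f K) (hK : IsCompact K) (hK_meas : MeasurableSet K) :
    MemLp f p μ[|K] := by
  obtain ⟨C, hC⟩ := hK.exists_bound_of_continuousOn hf
  exact .of_bound ((hf.aestronglyMeasurable_of_isCompact hK hK_meas).smul_measure _) C
    (ae_cond_of_forall_mem hK_meas hC)

variable {a b : ℝ}

theorem isProbabilityMeasure_cond_Icc (hab : a < b) :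
    IsProbabilityMeasure (volume : Measure ℝ)[|Set.Icc a b] :=
  cond_isProbabilityMeasure_of_finite (by simpa using hab) measure_Icc_lt_top.ne

theorem integral_cond_Icc {E : Type*} [NormedAddCommGroup E] [NormedSpace ℝ E] (hab : a ≤ b)
    (f : ℝ → E) : ∫ x, f x ∂volume[|Set.Icc a b] = (b - a)⁻¹ • ∫ x in a..b, f x := by
  rw [ProbabilityTheory.cond, ← setAverage_eq', setAverage_eq, Real.volume_real_Icc_of_le hab,
    integral_Icc_eq_integral_Ioc, intervalIntegral.integral_of_le hab]

theorem variance_cond_Icc_of_continuousOn (hab : a < b) {f : ℝ → ℝ}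
    (hf : ContinuousOn f (Set.Icc a b)) :
    Var[f; volume[|Set.Icc a b]]
      = (b - a)⁻¹ * (∫ x in a..b, f x ^ 2) - ((b - a)⁻¹ * ∫ x in a..b, f x) ^ 2 := by
  have := isProbabilityMeasure_cond_Icc hab
  rw [variance_eq_sub (memLp_cond_of_continuousOn hf isCompact_Icc measurableSet_Icc)]
  simp only [Pi.pow_apply, integral_cond_Icc hab.le, smul_eq_mul]

end UniformMeasure

theorem norm_primitive_sub_primitive_le {E : Type*} [NormedAddCommGroup E] [NormedSpace ℝ E]
    {ν : Measure ℝ} {b : ℝ → E} {B : ℝ → ℝ} (hb : ∀ x y, IntervalIntegrable b ν x y)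
    (hB : ∀ x y, IntervalIntegrable B ν x y) (hle : ∀ᵐ r ∂ν, ‖b r‖ ≤ B r) (c x y : ℝ) :
    ‖(∫ r in c..x, b r ∂ν) - ∫ r in c..y, b r ∂ν‖
      ≤ |(∫ r in c..x, B r ∂ν) - ∫ r in c..y, B r ∂ν| := by
  rw [intervalIntegral.integral_interval_sub_left (hb c x) (hb c y),
    intervalIntegral.integral_interval_sub_left (hB c x) (hB c y)]
  exact intervalIntegral.norm_integral_le_abs_of_norm_le (ae_restrict_of_ae hle) (hB y x)

theorem pathwise_variance_le_general {Ω : Type*} [MeasurableSpace Ω] {μ : Measure Ω}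
    [IsProbabilityMeasure μ] {ν : Measure ℝ} [NullSingletonClass ν] {b B : ℝ → ℝ}
    (hb : AEStronglyMeasurable b ν) (hB : ∀ x y, IntervalIntegrable B ν x y)
    (hle : ∀ᵐ r ∂ν, |b r| ≤ B r) (c : ℝ) {W : Ω → ℝ} (hW : AEMeasurable W μ)
    (hBW : MemLp (fun ω ↦ ∫ r in c..W ω, B r ∂ν) 2 μ) :
    Var[fun ω ↦ ∫ r in c..W ω, b r ∂ν; μ] ≤ Var[fun ω ↦ ∫ r in c..W ω, B r ∂ν; μ] := by
  have hb_int (x y : ℝ) : IntervalIntegrable b ν x y :=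
    (hB x y).mono_fun' hb.restrict (ae_restrict_of_ae hle)
  have hbW : AEMeasurable (fun ω ↦ ∫ r in c..W ω, b r ∂ν) μ :=
    (intervalIntegral.continuous_primitive hb_int c).measurable.comp_aemeasurable hW
  exact variance_le_variance_of_abs_sub_le hbW.aestronglyMeasurable hBW
    (.of_forall fun p ↦ norm_primitive_sub_primitive_le hb_int hB hle c (W p.1) (W p.2))

/-- Path-wise variance inequality: if `|b| ≤ B` pointwise (with `b, B`
continuous), `a, A` are their antiderivatives starting at `0`, `β > 0` and
`w` is a continuous path on `[0, β]`, then the time-average variance of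
`a ∘ w` over `[0, β]` is at most that of `A ∘ w`. -/
theorem pathwise_variance_le
    (b B : ℝ → ℝ) (hb : Continuous b) (hB : Continuous B)
    (hle : ∀ r : ℝ, |b r| ≤ B r)
    (β : ℝ) (hβ : 0 < β)
    (w : ℝ → ℝ) (hw : ContinuousOn w (Set.Icc 0 β)) :
    (1 / β) * (∫ τ in (0:ℝ)..β, (∫ r in (0:ℝ)..(w τ), b r) ^ 2)
        - ((1 / β) * ∫ τ in (0:ℝ)..β, ∫ r in (0:ℝ)..(w τ), b r) ^ 2
      ≤ (1 / β) * (∫ τ in (0:ℝ)..β, (∫ r in (0:ℝ)..(w τ), B r) ^ 2)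
        - ((1 / β) * ∫ τ in (0:ℝ)..β, ∫ r in (0:ℝ)..(w τ), B r) ^ 2 := by
  have := isProbabilityMeasure_cond_Icc hβ
  have hw_meas : AEMeasurable w volume[|Set.Icc 0 β] :=
    (hw.aemeasurable measurableSet_Icc).smul_measure _
  have continuousOn_primitive {f : ℝ → ℝ} (hf : Continuous f) :
      ContinuousOn (fun τ ↦ ∫ r in (0:ℝ)..(w τ), f r) (Set.Icc 0 β) :=
    (intervalIntegral.continuous_primitive hf.intervalIntegrable 0).comp_continuousOn hw
  have variance_le := pathwise_variance_le_general hb.aestronglyMeasurable hB.intervalIntegrable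
    (.of_forall hle) 0 hw_meas
    (memLp_cond_of_continuousOn (continuousOn_primitive hB) isCompact_Icc measurableSet_Icc)
  simpa only [variance_cond_Icc_of_continuousOn hβ (continuousOn_primitive hb),
    variance_cond_Icc_of_continuousOn hβ (continuousOn_primitive hB), sub_zero, one_div]
    using variance_le
end

section
/- Let C₀ > 0, let d be a positive integer, and let h > 0. Define F : ℝ → ℝ by F(E) := inf_{β > 0} (2π β h²)^{−d/2} · exp(β² C₀ / 2) · exp(β E). Then ln F(E) / E² → −1/(2 C₀) as E → −∞. (This says that the quasi-classical upper bound on the integrated density of states, with the Gaussian value L_β = exp(β² C₀/2) for a homogeneous Gaussian random potential of single-site variance C₀ and optimized over the inverse temperature β, exhibits the exact Gaussian low-energy decay ln N(E) ∼ −E²/(2 C₀).) -/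
open Real Filter

/-!
With `g = log ∘ w`, the logarithm of `⨅ β > 0, w β * exp (β * E)` is the Legendre-type infimum
`⨅ β > 0, (g β + β * E)`. If `g β ∼ C * β ^ 2 / 2` then the choice `β = -E / C` bounds it from above
by `-E ^ 2 / (2 * C) + o(E ^ 2)`, while for every `C' < C` the estimate
`C' / 2 * β ^ 2 - M ≤ g β` and completing the square bound it from below by `-E ^ 2 / (2 * C') - M`.
The thermal prefactor `(2 * π * β * h ^ 2) ^ (-d / 2)` contributes only `O(log β)` to `g` at infinity
and stays away from zero as `β → 0`.
-/

theorem neg_sq_div_two_mul_le {c : ℝ} (hc : 0 < c) (x y : ℝ) :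
    -y ^ 2 / (2 * c) ≤ c / 2 * x ^ 2 + x * y := by
  have complete_square :
      c / 2 * x ^ 2 + x * y - -y ^ 2 / (2 * c) = (c * x + y) ^ 2 / (2 * c) := by
    field_simp
    ring
  have : 0 ≤ (c * x + y) ^ 2 / (2 * c) := by positivity
  linarith

theorem log_ciInf {ι : Type*} [Nonempty ι] {f : ι → ℝ} (hpos : ∀ i, 0 < f i)
    (hbdd : BddBelow (Set.range fun i => log (f i))) :
    log (⨅ i, f i) = ⨅ i, log (f i) := by
  have hexp : exp (⨅ i, log (f i)) = ⨅ i, f i := by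
    simpa only [exp_log (hpos _)] using
      exp_monotone.map_ciInf_of_continuousAt continuous_exp.continuousAt hbdd
  rw [← hexp, log_exp]

section QuadraticGrowth

variable {g : ℝ → ℝ} {C : ℝ}

theorem exists_forall_pos_mul_sq_sub_le {c : ℝ}
    (hbdd : ∀ b > 0, BddBelow (g '' Set.Ioc 0 b))
    (hg : Tendsto (fun β => g β / β ^ 2) atTop (nhds C)) (hc : c < C) :
    ∃ M, ∀ β > 0, c * β ^ 2 - M ≤ g β := by
  obtain ⟨b, hb, hfar⟩ : ∃ b > 0, ∀ β ≥ b, c < g β / β ^ 2 :=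
    ((hg.eventually_const_lt hc).exists_forall_of_atTop).elim fun b hb =>
      ⟨max b 1, by positivity, fun β hβ => hb β ((le_max_left b 1).trans hβ)⟩
  obtain ⟨m, hm⟩ := hbdd b hb
  refine ⟨max 0 (|c| * b ^ 2 - m), fun β hβ => ?_⟩
  rcases le_total β b with hβb | hbβ
  · have hgm : m ≤ g β := hm (Set.mem_image_of_mem g ⟨hβ, hβb⟩)
    have hcb : c * β ^ 2 ≤ |c| * b ^ 2 := by
      gcongr
      exact le_abs_self c
    linarith [le_max_right 0 (|c| * b ^ 2 - m)]
  · have hlt : c * β ^ 2 < g β := (lt_div_iff₀ (by positivity)).1 (hfar β hbβ)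
    linarith [le_max_left 0 (|c| * b ^ 2 - m)]

theorem neg_sq_div_sub_le_add_mul {c M : ℝ} (hc : 0 < c)
    (hM : ∀ β > 0, c / 2 * β ^ 2 - M ≤ g β) (E : ℝ) (β : {x : ℝ // 0 < x}) :
    -E ^ 2 / (2 * c) - M ≤ g β + β * E := by
  linarith [neg_sq_div_two_mul_le hc β E, hM β β.2]

theorem bddBelow_range_add_mul (hC : 0 < C)
    (hbdd : ∀ b > 0, BddBelow (g '' Set.Ioc 0 b))
    (hg : Tendsto (fun β => g β / β ^ 2) atTop (nhds C)) (E : ℝ) :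
    BddBelow (Set.range fun β : {x : ℝ // 0 < x} => g β + β * E) := by
  obtain ⟨M, hM⟩ := exists_forall_pos_mul_sq_sub_le hbdd hg (half_lt_self hC)
  exact ⟨_, Set.forall_mem_range.2 (neg_sq_div_sub_le_add_mul hC hM E)⟩

theorem eventually_lt_ciInf_add_mul_div_sq {a : ℝ} (hC : 0 < C)
    (hbdd : ∀ b > 0, BddBelow (g '' Set.Ioc 0 b))
    (hg : Tendsto (fun β => g β / β ^ 2) atTop (nhds (C / 2))) (ha : a < -1 / (2 * C)) :
    ∀ᶠ E in atBot, a < (⨅ β : {x : ℝ // 0 < x}, (g β + β * E)) / E ^ 2 := by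
  obtain ⟨c, hac, hc, hcC⟩ : ∃ c, a < -1 / (2 * c) ∧ 0 < c ∧ c < C := by
    have hcont : ContinuousAt (fun c : ℝ => -1 / (2 * c)) C :=
      continuousAt_const.div (by fun_prop) (by positivity)
    have hnear : ∀ᶠ c in nhdsWithin C (Set.Iio C), a < -1 / (2 * c) ∧ 0 < c :=
      nhdsWithin_le_nhds ((hcont.eventually_const_lt ha).and (eventually_gt_nhds hC))
    obtain ⟨c, ⟨hac, hc⟩, hcC⟩ := (hnear.and self_mem_nhdsWithin).exists
    exact ⟨c, hac, hc, hcC⟩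
  obtain ⟨M, hM⟩ := exists_forall_pos_mul_sq_sub_le hbdd hg (div_lt_div_of_pos_right hcC two_pos)
  have hlim : Tendsto (fun E : ℝ => -1 / (2 * c) - M / E ^ 2) atBot (nhds (-1 / (2 * c))) := by
    have hsq : Tendsto (fun E : ℝ => E ^ 2) atBot atTop := by
      simpa only [Function.comp_def, neg_sq] using
        (tendsto_pow_atTop two_ne_zero).comp (tendsto_neg_atBot_atTop (G := ℝ))
    simpa only [sub_zero] using tendsto_const_nhds.sub (tendsto_const_nhds.div_atTop hsq)
  filter_upwards [hlim.eventually_const_lt hac, eventually_lt_atBot 0] with E haE hE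
  have : Nonempty {x : ℝ // 0 < x} := ⟨⟨1, one_pos⟩⟩
  have hE0 : E ≠ 0 := hE.ne
  calc a < -1 / (2 * c) - M / E ^ 2 := haE
    _ = (-E ^ 2 / (2 * c) - M) / E ^ 2 := by field_simp
    _ ≤ _ := by
      gcongr
      exact le_ciInf (neg_sq_div_sub_le_add_mul hc hM E)

theorem ciInf_add_mul_div_sq_le {E : ℝ} (hC : 0 < C) (hE : E < 0)
    (hbdd : BddBelow (Set.range fun β : {x : ℝ // 0 < x} => g β + β * E)) :
    (⨅ β : {x : ℝ // 0 < x}, (g β + β * E)) / E ^ 2 ≤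
      g (-E / C) / (-E / C) ^ 2 / C ^ 2 - 1 / C := by
  have hβ : 0 < -E / C := div_pos (neg_pos.2 hE) hC
  calc (⨅ β : {x : ℝ // 0 < x}, (g β + β * E)) / E ^ 2
      ≤ (g (-E / C) + -E / C * E) / E ^ 2 := by
        gcongr
        exact ciInf_le hbdd ⟨-E / C, hβ⟩
    _ = g (-E / C) / (-E / C) ^ 2 / C ^ 2 - 1 / C := by
        have : E ≠ 0 := hE.ne
        field_simp
        ring

theorem tendsto_ciInf_add_mul_div_sq (hC : 0 < C)
    (hbdd : ∀ b > 0, BddBelow (g '' Set.Ioc 0 b))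
    (hg : Tendsto (fun β => g β / β ^ 2) atTop (nhds (C / 2))) :
    Tendsto (fun E => (⨅ β : {x : ℝ // 0 < x}, (g β + β * E)) / E ^ 2) atBot
      (nhds (-1 / (2 * C))) := by
  have hupper : Tendsto (fun E => g (-E / C) / (-E / C) ^ 2 / C ^ 2 - 1 / C) atBot
      (nhds (-1 / (2 * C))) := by
    have hlim := ((hg.comp (tendsto_neg_atBot_atTop.atTop_div_const hC)).div_const
      (C ^ 2)).sub_const (1 / C)
    have hvalue : C / 2 / C ^ 2 - 1 / C = -1 / (2 * C) := by
      field_simp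
      norm_num
    rwa [hvalue] at hlim
  refine tendsto_order.2 ⟨fun a ha => eventually_lt_ciInf_add_mul_div_sq hC hbdd hg ha,
    fun a ha => ?_⟩
  filter_upwards [hupper.eventually_lt_const ha, eventually_lt_atBot 0] with E hEa hE
  exact (ciInf_add_mul_div_sq_le hC hE
    (bddBelow_range_add_mul (half_pos hC) hbdd hg E)).trans_lt hEa

end QuadraticGrowth

theorem tendsto_log_const_mul_div_pow_atTop {a : ℝ} (ha : a ≠ 0) {n : ℕ} (hn : n ≠ 0) :
    Tendsto (fun x => log (a * x) / x ^ n) atTop (nhds 0) := by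
  have hconst : Tendsto (fun x : ℝ => log a / x ^ n) atTop (nhds 0) :=
    tendsto_const_nhds.div_atTop (tendsto_pow_atTop hn)
  have hlog : Tendsto (fun x => log x / x ^ n) atTop (nhds 0) := by
    simpa only [rpow_natCast] using
      (isLittleO_log_rpow_atTop (Nat.cast_pos.2 hn.bot_lt : (0 : ℝ) < n)).tendsto_div_nhds_zero
  rw [← add_zero 0]
  refine (hconst.add hlog).congr' ?_
  filter_upwards [eventually_ne_atTop 0] with x hx
  rw [log_mul ha hx, add_div]

section ThermalWeight

variable {a s C : ℝ}

theorem exists_pos_le_rpow_mul_exp_sq (ha : 0 < a) (hs : s ≤ 0) (hC : 0 ≤ C) :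
    ∀ b > 0, ∃ m > 0, ∀ β ∈ Set.Ioc 0 b, m ≤ (a * β) ^ s * exp (β ^ 2 * C / 2) := by
  intro b hb
  refine ⟨(a * b) ^ s, by positivity, fun β hβ => ?_⟩
  have haβ : 0 < a * β := mul_pos ha hβ.1
  calc (a * b) ^ s ≤ (a * β) ^ s :=
        rpow_le_rpow_of_nonpos haβ (mul_le_mul_of_nonneg_left hβ.2 ha.le) hs
    _ ≤ (a * β) ^ s * exp (β ^ 2 * C / 2) :=
        le_mul_of_one_le_right (by positivity) (one_le_exp (by positivity))

theorem tendsto_log_rpow_mul_exp_sq_div_sq (ha : 0 < a) (s C : ℝ) :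
    Tendsto (fun β => log ((a * β) ^ s * exp (β ^ 2 * C / 2)) / β ^ 2) atTop
      (nhds (C / 2)) := by
  have hlim : Tendsto (fun β => s * (log (a * β) / β ^ 2) + C / 2) atTop (nhds (C / 2)) := by
    simpa only [mul_zero, zero_add] using
      ((tendsto_log_const_mul_div_pow_atTop ha.ne' two_ne_zero).const_mul s).add_const (C / 2)
  refine hlim.congr' ?_
  filter_upwards [eventually_gt_atTop 0] with β hβ
  rw [log_mul (by positivity) (exp_ne_zero _), log_exp, log_rpow (by positivity)]
  field_simp

end ThermalWeight

theorem gaussian_tail_of_optimized_bound_general {C : ℝ} (hC : 0 < C) {w : ℝ → ℝ}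
    (hlower : ∀ b > 0, ∃ m > 0, ∀ β ∈ Set.Ioc 0 b, m ≤ w β)
    (hgrowth : Tendsto (fun β => log (w β) / β ^ 2) atTop (nhds (C / 2))) :
    Tendsto (fun E => log (⨅ β : {x : ℝ // 0 < x}, w β * exp (β * E)) / E ^ 2) atBot
      (nhds (-1 / (2 * C))) := by
  have hpos : ∀ β > 0, 0 < w β := fun β hβ =>
    let ⟨_, hm, hmw⟩ := hlower β hβ
    hm.trans_le (hmw β ⟨hβ, le_rfl⟩)
  have hbdd : ∀ b > 0, BddBelow ((fun β => log (w β)) '' Set.Ioc 0 b) := fun b hb =>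
    let ⟨m, hm, hmw⟩ := hlower b hb
    ⟨log m, Set.forall_mem_image.2 fun β hβ => log_le_log hm (hmw β hβ)⟩
  have hlog (E : ℝ) (β : {x : ℝ // 0 < x}) :
      log (w β * exp (β * E)) = log (w β) + β * E := by
    rw [log_mul (hpos β β.2).ne' (exp_ne_zero _), log_exp]
  refine (tendsto_ciInf_add_mul_div_sq hC hbdd hgrowth).congr fun E => ?_
  have : Nonempty {x : ℝ // 0 < x} := ⟨⟨1, one_pos⟩⟩
  rw [log_ciInf (fun β : {x : ℝ // 0 < x} => mul_pos (hpos β β.2) (exp_pos _)) ?_]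
  · simp only [hlog]
  · simpa only [hlog] using bddBelow_range_add_mul (half_pos hC) hbdd hgrowth E

/-- The optimized quasi-classical bound on the integrated density of states
for a homogeneous Gaussian random potential,
`F E = inf_{β > 0} (2πβh²)^{-d/2} exp(β²C₀/2) exp(βE)`, has exact Gaussian
low-energy decay: `log (F E) / E² → -1/(2C₀)` as `E → -∞`. -/
theorem gaussian_tail_of_optimized_bound
    (C₀ : ℝ) (hC₀ : 0 < C₀) (d : ℕ) (hd : 0 < d) (h : ℝ) (hh : 0 < h)
    (F : ℝ → ℝ)
    (hF : ∀ E : ℝ, F E = ⨅ β : {x : ℝ // 0 < x},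
      (2 * π * (β : ℝ) * h ^ 2) ^ (-(d : ℝ) / 2)
        * Real.exp ((β : ℝ) ^ 2 * C₀ / 2) * Real.exp ((β : ℝ) * E)) :
    Tendsto (fun E => Real.log (F E) / E ^ 2) atBot (nhds (-1 / (2 * C₀))) := by
  have ha : 0 < 2 * π * h ^ 2 := by positivity
  have hs : -(d : ℝ) / 2 ≤ 0 := by linarith [d.cast_nonneg (α := ℝ)]
  simpa only [hF, mul_right_comm (2 * π) _ (h ^ 2)] using
    gaussian_tail_of_optimized_bound_general hC₀ (exists_pos_le_rpow_mul_exp_sq ha hs hC₀.le)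
      (tendsto_log_rpow_mul_exp_sq_div_sq ha _ C₀)
end
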